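/- Let E be a real Banach space and let 𝒵 ⊆ ℭ(E) be a nonempty set that is compact with respect to the Pompeiu–Hausdorff metric h. Let {Z_n} be a sequence with Z_n ∈ 𝒵 for all n, and let C ∈ ℭ_c(E) be a compact set. If Z_n →W C (Wijsman convergence), then Z_n →h C (Pompeiu–Hausdorff convergence). -/

import Mathlib

open Metric Filter Topology

variable {E : Type*} [NormedAddCommGroup E] [NormedSpace ℝ E] [CompleteSpace E]

/-- The excess `e(A,B) = sup_{a ∈ A} d(a, B)`. -/
noncomputable def excess (A B : Set E) : ℝ := sSup ((fun a => infDist a B) '' A)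

/-- The Pompeiu–Hausdorff distance `h(A,B) = max (e(A,B)) (e(B,A))`. -/
noncomputable def hdist (A B : Set E) : ℝ := max (excess A B) (excess B A)

/-- A family of sets is compact in the Pompeiu–Hausdorff metric iff it is sequentially
compact: every sequence in the family has a subsequence converging in `h` to a member. -/
def HCompact (𝒵 : Set (Set E)) : Prop :=
  ∀ Z : ℕ → Set E, (∀ n, Z n ∈ 𝒵) →
    ∃ W ∈ 𝒵, ∃ φ : ℕ → ℕ, StrictMono φ ∧
      Tendsto (fun k => hdist (Z (φ k)) W) atTop (𝓝 0)

/-!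
Hausdorff convergence implies pointwise convergence of the distance functions, so every Hausdorff
subsequential limit of `Z` has the same distance function as `C`, hence the same closure.
Compactness of `𝒵` provides such a limit along every subsequence, and the Hausdorff distance does
not distinguish a set from its closure.
-/

section PseudoMetricSpace

variable {α ι : Type*} [PseudoMetricSpace α] {s t : Set α}

lemma abs_infDist_sub_infDist_le_hausdorffDist (fin : hausdorffEDist s t ≠ ⊤) (x : α) :
    |infDist x s - infDist x t| ≤ hausdorffDist s t := by
  have hst : infDist x t ≤ infDist x s + hausdorffDist s t :=
    infDist_le_infDist_add_hausdorffDist fin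
  have hts : infDist x s ≤ infDist x t + hausdorffDist s t := by
    rw [hausdorffDist_comm]
    exact infDist_le_infDist_add_hausdorffDist (hausdorffEDist_comm.trans_ne fin)
  rw [abs_sub_le_iff]
  constructor <;> linarith

lemma tendsto_infDist_of_tendsto_hausdorffDist {l : Filter ι} {S : ι → Set α}
    (fin : ∀ i, hausdorffEDist (S i) t ≠ ⊤)
    (hS : Tendsto (fun i => hausdorffDist (S i) t) l (𝓝 0)) (x : α) :
    Tendsto (fun i => infDist x (S i)) l (𝓝 (infDist x t)) :=
  tendsto_iff_dist_tendsto_zero.2 <| squeeze_zero (fun _ => dist_nonneg)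
    (fun i => abs_infDist_sub_infDist_le_hausdorffDist (fin i) x) hS

lemma closure_eq_closure_of_infDist_eq (hs : s.Nonempty) (ht : t.Nonempty)
    (h : ∀ x, infDist x s = infDist x t) : closure s = closure t := by
  ext x
  rw [mem_closure_iff_infDist_zero hs, mem_closure_iff_infDist_zero ht, h]

end PseudoMetricSpace

section Excess

omit [NormedSpace ℝ E] [CompleteSpace E]

variable {A B : Set E}

lemma infDist_le_excess (hA : Bornology.IsBounded A) {a : E} (ha : a ∈ A) :
    infDist a B ≤ excess A B :=
  le_csSup ((lipschitz_infDist_pt B).isBounded_image hA).bddAbove (Set.mem_image_of_mem _ ha)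

lemma excess_le_hausdorffDist (fin : hausdorffEDist A B ≠ ⊤) :
    excess A B ≤ hausdorffDist A B :=
  Real.sSup_le (Set.forall_mem_image.2 fun _ ha => infDist_le_hausdorffDist_of_mem ha fin)
    hausdorffDist_nonneg

lemma hdist_eq_hausdorffDist (hAne : A.Nonempty) (hA : Bornology.IsBounded A)
    (hBne : B.Nonempty) (hB : Bornology.IsBounded B) : hdist A B = hausdorffDist A B := by
  have fin : hausdorffEDist A B ≠ ⊤ := hausdorffEDist_ne_top_of_nonempty_of_bounded hAne hBne hA hB
  apply le_antisymm
  · refine max_le (excess_le_hausdorffDist fin) ?_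
    rw [hausdorffDist_comm]
    exact excess_le_hausdorffDist (hausdorffEDist_comm.trans_ne fin)
  · obtain ⟨a₀, ha₀⟩ := hAne
    have hdist_nonneg : 0 ≤ hdist A B :=
      infDist_nonneg.trans <| (infDist_le_excess hA ha₀).trans (le_max_left _ _)
    exact hausdorffDist_le_of_infDist hdist_nonneg
      (fun _ ha => (infDist_le_excess hA ha).trans (le_max_left _ _))
      (fun _ hb => (infDist_le_excess hB hb).trans (le_max_right _ _))

lemma tendsto_infDist_of_tendsto_hdist {ι : Type*} {l : Filter ι} {Z : ι → Set E}
    (hZne : ∀ i, (Z i).Nonempty) (hZ : ∀ i, Bornology.IsBounded (Z i))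
    (hBne : B.Nonempty) (hB : Bornology.IsBounded B)
    (hlim : Tendsto (fun i => hdist (Z i) B) l (𝓝 0)) (z : E) :
    Tendsto (fun i => infDist z (Z i)) l (𝓝 (infDist z B)) := by
  simp only [hdist_eq_hausdorffDist (hZne _) (hZ _) hBne hB] at hlim
  exact tendsto_infDist_of_tendsto_hausdorffDist
    (fun i => hausdorffEDist_ne_top_of_nonempty_of_bounded (hZne i) hBne (hZ i) hB) hlim z

lemma hdist_congr_right_of_closure_eq {B' : Set E} (hAne : A.Nonempty)
    (hA : Bornology.IsBounded A) (hBne : B.Nonempty) (hB : Bornology.IsBounded B)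
    (h : closure B = closure B') : hdist A B = hdist A B' := by
  have hB'ne : B'.Nonempty := closure_nonempty_iff.1 (h ▸ hBne.closure)
  have hB' : Bornology.IsBounded B' := isBounded_closure_iff.1 (h ▸ hB.closure)
  rw [hdist_eq_hausdorffDist hAne hA hBne hB, hdist_eq_hausdorffDist hAne hA hB'ne hB',
    ← hausdorffDist_closure₂, h, hausdorffDist_closure₂]

theorem hConv_of_wijsmanConv_of_hCompact_general {𝒵 : Set (Set E)}
    (h𝒵 : ∀ A ∈ 𝒵, A.Nonempty ∧ Bornology.IsBounded A) (h𝒵c : HCompact 𝒵)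
    {ι : Type*} {l : Filter ι} [l.IsCountablyGenerated] {Z : ι → Set E} (hZ : ∀ i, Z i ∈ 𝒵)
    {C : Set E} (hCne : C.Nonempty)
    (hW : ∀ z : E, Tendsto (fun i => infDist z (Z i)) l (𝓝 (infDist z C))) :
    Tendsto (fun i => hdist (Z i) C) l (𝓝 0) := by
  have hZne (i : ι) : (Z i).Nonempty := (h𝒵 _ (hZ i)).1
  have hZbd (i : ι) : Bornology.IsBounded (Z i) := (h𝒵 _ (hZ i)).2
  refine tendsto_of_subseq_tendsto fun u hu => ?_
  obtain ⟨W, hW𝒵, φ, hφ, hlim⟩ := h𝒵c (fun n => Z (u n)) fun n => hZ (u n)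
  obtain ⟨hWne, hWbd⟩ := h𝒵 W hW𝒵
  have infDist_eq (z : E) : infDist z W = infDist z C :=
    tendsto_nhds_unique
      (tendsto_infDist_of_tendsto_hdist (fun _ => hZne _) (fun _ => hZbd _) hWne hWbd hlim z)
      ((hW z).comp (hu.comp hφ.tendsto_atTop))
  have closure_eq : closure W = closure C := closure_eq_closure_of_infDist_eq hWne hCne infDist_eq
  refine ⟨φ, hlim.congr fun n => ?_⟩
  exact hdist_congr_right_of_closure_eq (hZne _) (hZbd _) hWne hWbd closure_eq

end Excess

/-- Proposition 3.5: if `𝒵 ⊆ ℭ(E)` is nonempty and compact in the Pompeiu–Hausdorff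
metric, `Zₙ ∈ 𝒵` for all `n`, and `C` is a compact set in `ℭ_c(E)`, then Wijsman
convergence `Zₙ →W C` implies Pompeiu–Hausdorff convergence `Zₙ →h C`. -/
theorem hConv_of_wijsmanConv_of_hCompact (𝒵 : Set (Set E)) (h𝒵ne : 𝒵.Nonempty)
    (h𝒵 : ∀ A ∈ 𝒵, A.Nonempty ∧ IsClosed A ∧ Bornology.IsBounded A)
    (h𝒵c : HCompact 𝒵)
    (Z : ℕ → Set E) (hZ : ∀ n, Z n ∈ 𝒵)
    (C : Set E) (hCne : C.Nonempty) (hCcl : IsClosed C)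
    (hCbd : Bornology.IsBounded C) (hCcv : Convex ℝ C) (hCk : IsCompact C)
    (hW : ∀ z : E, Tendsto (fun n => infDist z (Z n)) atTop (𝓝 (infDist z C))) :
    Tendsto (fun n => hdist (Z n) C) atTop (𝓝 0) :=
  hConv_of_wijsmanConv_of_hCompact_general (fun A hA => ⟨(h𝒵 A hA).1, (h𝒵 A hA).2.2⟩) h𝒵c hZ hCne hW
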